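/- Let g(x) = log₂(1 + x/2) and let ⟨⟨·⟩⟩ be a norm on c₀₀ satisfying the implicit equation ⟨⟨x⟩⟩ = max(‖x‖_{ℓ∞}, sup{ (1/g(ℓ)) Σ_{i=1}^ℓ ⟨⟨E_i(x)⟩⟩ : ℓ ≥ 3, E₁ < E₂ < ⋯ < E_ℓ finite subsets of ℕ }) for all x ∈ c₀₀. Then ⟨⟨·⟩⟩ is equivalent to ‖·‖: ‖x‖ ≤ ⟨⟨x⟩⟩ for all x ∈ c₀₀, and there is a constant C ≥ 1 such that ⟨⟨x⟩⟩ ≤ C ‖x‖ for all x ∈ c₀₀. -/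

import Mathlib

abbrev c00 : Type := ℕ →₀ ℝ

noncomputable def flog (x : ℝ) : ℝ := Real.logb 2 (x + 1)

noncomputable def supNorm (x : c00) : ℝ := ⨆ i, |x i|

def proj (E : Finset ℕ) (x : c00) : c00 := x.filter (· ∈ E)

def FLt (A B : Finset ℕ) : Prop := ∀ a ∈ A, ∀ b ∈ B, a < b

def IsNormC00 (N : c00 → ℝ) : Prop :=
  (∀ x, N x = 0 ↔ x = 0) ∧ (∀ x y, N (x + y) ≤ N x + N y) ∧
    ∀ (a : ℝ) (x : c00), N (a • x) = |a| * N x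

def schSet (N : c00 → ℝ) (x : c00) : Set ℝ :=
  {s | ∃ n : ℕ, 2 ≤ n ∧ ∃ E : Fin n → Finset ℕ,
    (∀ i j : Fin n, i < j → FLt (E i) (E j)) ∧
    s = (flog n)⁻¹ * ∑ i, N (proj (E i) x)}

def IsSchlumprechtNorm (N : c00 → ℝ) : Prop :=
  IsNormC00 N ∧ ∀ x : c00, IsLUB (insert (supNorm x) (schSet N x)) (N x)

def IsBlockSeq (x : ℕ → c00) : Prop :=
  (∀ n, x n ≠ 0) ∧ ∀ n, ∀ i ∈ (x n).support, ∀ j ∈ (x (n+1)).support, i < j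

def SeqEquiv (N : c00 → ℝ) (u v : ℕ → c00) : Prop :=
  ∃ c : ℝ, 1 ≤ c ∧ ∀ a : ℕ →₀ ℝ,
    (1 / c) * N (a.sum fun i t => t • u i) ≤ N (a.sum fun i t => t • v i) ∧
    N (a.sum fun i t => t • v i) ≤ c * N (a.sum fun i t => t • u i)

noncomputable def glog (x : ℝ) : ℝ := Real.logb 2 (1 + x / 2)

def gSet (Nb : c00 → ℝ) (x : c00) : Set ℝ :=
  {s | ∃ l : ℕ, 3 ≤ l ∧ ∃ E : Fin l → Finset ℕ,
    (∀ i j : Fin l, i < j → FLt (E i) (E j)) ∧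
    s = (glog l)⁻¹ * ∑ i, Nb (proj (E i) x)}

/-- `Nb` is a norm on `c₀₀` satisfying the implicit equation
`⟨⟨x⟩⟩ = max(‖x‖_{ℓ∞}, sup{(1/g(ℓ)) ∑ᵢ ⟨⟨Eᵢ(x)⟩⟩ : ℓ ≥ 3, E₁ < ⋯ < E_ℓ})`. -/
def IsGNorm (Nb : c00 → ℝ) : Prop :=
  IsNormC00 Nb ∧ ∀ x : c00, IsLUB (insert (supNorm x) (gSet Nb x)) (Nb x)

lemma proj_apply' (E : Finset ℕ) (x : c00) (i : ℕ) : proj E x i = if i ∈ E then x i else 0 := by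
  simp [proj, Finsupp.filter_apply]

lemma proj_proj (E F : Finset ℕ) (x : c00) : proj E (proj F x) = proj (E ∩ F) x := by
  ext i
  simp only [proj_apply', Finset.mem_inter]
  split_ifs <;> tauto

lemma proj_empty (x : c00) : proj ∅ x = 0 := by
  ext i; simp [proj_apply']

lemma proj_supp (x : c00) : proj x.support x = x := by
  ext i
  rw [proj_apply']
  split_ifs with h
  · rfl
  · simpa using (Finsupp.notMem_support_iff.mp h).symm

lemma proj_sub {E F : Finset ℕ} (h : E ⊆ F) (x : c00) : proj E (proj F x) = proj E x := by
  rw [proj_proj, Finset.inter_eq_left.mpr h]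

lemma proj_inter_supp (E : Finset ℕ) (x : c00) : proj (E ∩ x.support) x = proj E x := by
  rw [← proj_proj, proj_supp]

lemma supNorm_bdd (x : c00) : BddAbove (Set.range fun i => |x i|) := by
  have : (Set.range fun i => |x i|) ⊆ insert 0 ((fun i => |x i|) '' (x.support : Set ℕ)) := by
    rintro _ ⟨i, rfl⟩
    by_cases h : x i = 0
    · left; simp [h]
    · right; exact ⟨i, by simpa using h, rfl⟩
  exact (((x.support.finite_toSet.image _).insert 0).subset this).bddAbove

lemma supNorm_nonneg (x : c00) : 0 ≤ supNorm x := Real.iSup_nonneg fun i => abs_nonneg _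

lemma supNorm_proj (E : Finset ℕ) (x : c00) : supNorm (proj E x) ≤ supNorm x := by
  apply ciSup_le
  intro i
  refine le_trans ?_ (le_ciSup (supNorm_bdd x) i)
  rw [proj_apply']
  split_ifs <;> simp

lemma supNorm_zero : supNorm 0 = 0 := by simp [supNorm]

lemma FLt.mono {A B A' B' : Finset ℕ} (h : FLt A B) (hA : A' ⊆ A) (hB : B' ⊆ B) : FLt A' B' :=
  fun a ha b hb => h a (hA ha) b (hB hb)

lemma FLt.inter_eq {A B : Finset ℕ} (h : FLt A B) : A ∩ B = ∅ := by
  ext a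
  simp only [Finset.mem_inter, Finset.notMem_empty, iff_false]
  rintro ⟨ha, hb⟩
  exact lt_irrefl _ (h a ha a hb)

lemma fam_disj {n : ℕ} {E : Fin n → Finset ℕ} (hE : ∀ i j : Fin n, i < j → FLt (E i) (E j))
    {i j : Fin n} (h : i ≠ j) : E i ∩ E j = ∅ := by
  rcases lt_or_gt_of_ne h with h | h
  · exact (hE _ _ h).inter_eq
  · rw [Finset.inter_comm]; exact (hE _ _ h).inter_eq

lemma fam_split {n : ℕ} {E : Fin n → Finset ℕ} (hE : ∀ i j : Fin n, i < j → FLt (E i) (E j))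
    (F : Finset ℕ) (M : c00 → ℝ) (hM : M 0 = 0) (x : c00) :
    (∀ i, E i ∩ F ⊂ F) ∨ ∑ i, M (proj (E i) (proj F x)) = M (proj F x) := by
  by_cases h : ∀ i, E i ∩ F ⊂ F
  · exact Or.inl h
  right
  push Not at h
  obtain ⟨i, hi⟩ := h
  have hF : E i ∩ F = F := by
    by_contra hne
    exact hi ((Finset.inter_subset_right).ssubset_of_ne hne)
  rw [Finset.sum_eq_single i]
  · rw [proj_proj, hF]
  · intro j _ hj
    have : E j ∩ F = ∅ := by
      rw [← hF, ← Finset.inter_assoc, fam_disj hE hj, Finset.empty_inter]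
    rw [proj_proj, this, proj_empty, hM]
  · simp

lemma flog_mono {a b : ℝ} (ha : 0 ≤ a) (h : a ≤ b) : flog a ≤ flog b :=
  Real.logb_le_logb_of_le (by norm_num) (by linarith) (by linarith)

lemma glog_mono {a b : ℝ} (ha : 0 ≤ a) (h : a ≤ b) : glog a ≤ glog b :=
  Real.logb_le_logb_of_le (by norm_num) (by linarith) (by linarith)

lemma glog_le_flog {a : ℝ} (ha : 0 ≤ a) : glog a ≤ flog a :=
  Real.logb_le_logb_of_le (by norm_num) (by linarith) (by linarith)

lemma glog3_lb : 1.32 ≤ glog 3 := by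
  unfold glog
  rw [Real.le_logb_iff_rpow_le (by norm_num) (by norm_num)]
  have h : ((2:ℝ) ^ (1.32:ℝ)) ^ (25:ℕ) ≤ (1 + 3/2 : ℝ) ^ (25:ℕ) := by
    rw [← Real.rpow_natCast, ← Real.rpow_mul (by norm_num)]
    norm_num
  exact le_of_pow_le_pow_left₀ (by norm_num) (by norm_num) h

lemma glog_lb {l : ℕ} (h : 3 ≤ l) : 1.32 ≤ glog l :=
  glog3_lb.trans (glog_mono (by norm_num) (by exact_mod_cast h))

lemma le_two_pow_glog (l : ℕ) : (l : ℝ) ≤ 2 ^ (glog l + 1) := by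
  have : (0:ℝ) ≤ l := by positivity
  rw [Real.rpow_add (by norm_num), glog, Real.rpow_logb (by norm_num) (by norm_num) (by linarith)]
  norm_num; linarith

lemma glog3_le_flog2 : glog 3 ≤ flog 2 :=
  Real.logb_le_logb_of_le (by norm_num) (by norm_num) (by norm_num)

lemma flog_lb {n : ℕ} (h : 2 ≤ n) : 1.32 ≤ flog n :=
  (glog3_lb.trans glog3_le_flog2).trans (flog_mono (by norm_num) (by exact_mod_cast h))

lemma N_zero {N : c00 → ℝ} (h : IsNormC00 N) : N 0 = 0 := (h.1 0).2 rfl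

lemma N_sup {N : c00 → ℝ} (hN : IsSchlumprechtNorm N) (x : c00) : supNorm x ≤ N x :=
  (hN.2 x).1 (Set.mem_insert _ _)

lemma N_nonneg {N : c00 → ℝ} (hN : IsSchlumprechtNorm N) (x : c00) : 0 ≤ N x :=
  (supNorm_nonneg x).trans (N_sup hN x)

lemma Nb_sup {N : c00 → ℝ} (hN : IsGNorm N) (x : c00) : supNorm x ≤ N x :=
  (hN.2 x).1 (Set.mem_insert _ _)

lemma Nb_nonneg {N : c00 → ℝ} (hN : IsGNorm N) (x : c00) : 0 ≤ N x :=
  (supNorm_nonneg x).trans (Nb_sup hN x)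

lemma N_proj_le {N : c00 → ℝ} (hN : IsSchlumprechtNorm N) (F : Finset ℕ) (x : c00) :
    N (proj F x) ≤ N x := by
  apply (hN.2 (proj F x)).2
  rintro s (rfl | ⟨n, hn, E, hE, rfl⟩)
  · exact (supNorm_proj F x).trans (N_sup hN x)
  · apply (hN.2 x).1
    right
    refine ⟨n, hn, fun i => E i ∩ F, fun i j hij => (hE i j hij).mono Finset.inter_subset_left
      Finset.inter_subset_left, ?_⟩
    simp only [proj_proj]

lemma N_list {N : c00 → ℝ} (hN : IsSchlumprechtNorm N) (y : c00) (L : List (Finset ℕ))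
    (hL : L.Pairwise FLt) :
    (L.map fun F => N (proj F y)).sum ≤ flog L.length * N y := by
  rcases Nat.lt_or_ge L.length 2 with h | h
  · match L, h with
    | [], _ => simp [flog]
    | [F], _ =>
      have : flog (([F] : List (Finset ℕ)).length : ℝ) = 1 := by
        simp only [flog, List.length_singleton]; norm_num
      rw [this]
      simpa using N_proj_le hN F y
  · have h1 := (hN.2 y).1 (Set.mem_insert_of_mem _ ⟨L.length, h, L.get, ?_, rfl⟩)
    · have h2 := flog_lb h
      rw [inv_mul_le_iff₀ (by linarith)] at h1
      refine le_trans (le_of_eq ?_) h1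
      rw [← List.sum_ofFn]
      congr 1
      apply List.ext_getElem <;> simp
    · intro i j hij
      exact List.pairwise_iff_get.mp hL i j hij

lemma Nb_two {Nb : c00 → ℝ} (hNb : IsGNorm Nb) (y : c00) {n : ℕ} (hn : 2 ≤ n)
    {E : Fin n → Finset ℕ} (hE : ∀ i j : Fin n, i < j → FLt (E i) (E j)) :
    (flog n)⁻¹ * ∑ i, Nb (proj (E i) y) ≤ Nb y := by
  have hS : ∀ {k : ℕ} (E : Fin k → Finset ℕ), 0 ≤ ∑ i, Nb (proj (E i) y) :=
    fun E => Finset.sum_nonneg fun i _ => Nb_nonneg hNb _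
  rcases Nat.lt_or_ge n 3 with h | h
  · obtain rfl : n = 2 := by omega
    have h1 := (hNb.2 y).1 (Set.mem_insert_of_mem _ ⟨3, le_rfl, ![E 0, E 1, ∅], ?_, rfl⟩)
    · refine le_trans ?_ h1
      have : ∑ i, Nb (proj ((![E 0, E 1, ∅] : Fin 3 → Finset ℕ) i) y) = ∑ i, Nb (proj (E i) y) := by
        simp [Fin.sum_univ_succ, proj_empty, N_zero hNb.1]
      rw [this]
      apply mul_le_mul_of_nonneg_right _ (hS E)
      apply inv_anti₀
      · have := glog3_lb; norm_num; linarith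
      · exact_mod_cast glog3_le_flog2
    · intro i j hij
      fin_cases i <;> fin_cases j <;> simp at hij ⊢
      · exact hE 0 1 (by simp)
      all_goals intro a _ b hb; simp at hb
  · refine le_trans ?_ ((hNb.2 y).1 (Set.mem_insert_of_mem _ ⟨n, h, E, hE, rfl⟩))
    apply mul_le_mul_of_nonneg_right _ (hS E)
    apply inv_anti₀
    · have := glog_lb h; linarith
    · exact glog_le_flog (by positivity)

lemma part_one {N : c00 → ℝ} (hN : IsSchlumprechtNorm N) {Nb : c00 → ℝ} (hNb : IsGNorm Nb)
    (x : c00) (F : Finset ℕ) : N (proj F x) ≤ Nb (proj F x) := by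
  induction F using Finset.strongInduction with
  | H F ih =>
    by_contra hlt
    push Not at hlt
    have h0 := Nb_nonneg hNb (proj F x)
    have key : N (proj F x) ≤ max (Nb (proj F x)) (N (proj F x) / 1.32) := by
      apply (hN.2 (proj F x)).2
      rintro s (rfl | ⟨n, hn, E, hE, rfl⟩)
      · exact (Nb_sup hNb _).trans (le_max_left _ _)
      · have hf := flog_lb hn
        rcases fam_split hE F N (N_zero hN.1) x with h | h
        · refine le_trans ?_ (le_max_left _ _)
          refine le_trans ?_ (Nb_two hNb (proj F x) hn hE)
          apply mul_le_mul_of_nonneg_left _ (inv_nonneg.2 (by linarith))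
          apply Finset.sum_le_sum
          intro i _
          rw [proj_proj]
          exact ih _ (h i)
        · refine le_trans ?_ (le_max_right _ _)
          rw [h, inv_mul_eq_div]
          exact div_le_div_of_nonneg_left (by linarith) (by norm_num) hf
    rcases le_max_iff.mp key with h | h
    · linarith
    · rw [le_div_iff₀ (by norm_num)] at h
      linarith

lemma glog_tendsto (T : ℝ) : ∃ L0 : ℕ, ∀ l : ℕ, L0 ≤ l → T < glog l := by
  refine ⟨⌈2 * (2:ℝ) ^ T⌉₊, fun l hl => ?_⟩
  have h := Nat.ceil_le.mp hl
  unfold glog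
  have : (0:ℝ) < 2 ^ T := by positivity
  rw [Real.lt_logb_iff_rpow_lt (by norm_num) (by linarith)]
  linarith

lemma attain0 {Nb : c00 → ℝ} (hNb : IsGNorm Nb) (y : c00) :
    Nb y = supNorm y ∨ Nb y ∈ gSet Nb y := by
  by_cases hy : Nb y = supNorm y
  · exact Or.inl hy
  have hpos : 0 < Nb y :=
    (supNorm_nonneg y).trans_lt (lt_of_le_of_ne (Nb_sup hNb y) (Ne.symm hy))
  set S : Finset ℝ := y.support.powerset.powerset.image
    (fun 𝓕 => ∑ F ∈ 𝓕, Nb (proj F y)) with hS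
  have hmem : ∀ (n : ℕ) (E : Fin n → Finset ℕ), (∀ i j : Fin n, i < j → FLt (E i) (E j)) →
      ∑ i, Nb (proj (E i) y) ∈ S := by
    intro n E hE
    rw [hS, Finset.mem_image]
    refine ⟨Finset.univ.image (fun i => E i ∩ y.support), ?_, ?_⟩
    · rw [Finset.mem_powerset]
      intro F hF
      obtain ⟨i, _, rfl⟩ := Finset.mem_image.mp hF
      exact Finset.mem_powerset.mpr Finset.inter_subset_right
    · rw [Finset.sum_image_of_disjoint]
      · simp only [proj_inter_supp]
      · rw [Finset.bot_eq_empty, proj_empty, N_zero hNb.1]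
      · intro i _ j _ hij
        have := fam_disj hE hij
        rw [← Finset.disjoint_iff_inter_eq_empty] at this
        exact this.mono Finset.inter_subset_left Finset.inter_subset_left
  obtain ⟨T, hT⟩ := S.bddAbove
  obtain ⟨L0, hL0⟩ := glog_tendsto (2 * T / Nb y)
  set A := insert (supNorm y) (gSet Nb y) with hA
  set A' := A ∩ Set.Ioi (Nb y / 2) with hA'
  have hfin : A'.Finite := by
    have : A' ⊆ insert (supNorm y) (Set.image2 (fun (l : ℕ) (s : ℝ) => (glog l)⁻¹ * s)
        (Finset.range L0 : Set ℕ) (S : Set ℝ)) := by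
      rintro s ⟨rfl | ⟨l, hl, E, hE, rfl⟩, hs⟩
      · exact Set.mem_insert _ _
      · right
        refine ⟨l, ?_, _, hmem l E hE, rfl⟩
        simp only [Finset.coe_range, Set.mem_Iio]
        by_contra hcon
        push Not at hcon
        have h1 := hL0 l hcon
        have h2 := hT (hmem l E hE)
        have h3 := glog_lb hl
        have hs' : Nb y / 2 < (glog l)⁻¹ * ∑ i, Nb (proj (E i) y) := hs
        rw [lt_inv_mul_iff₀ (by linarith)] at hs'
        rw [div_lt_iff₀ hpos] at h1
        nlinarith
    exact (((Finset.finite_toSet _).image2 _ (Finset.finite_toSet _)).insert _).subset this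
  have hne : A'.Nonempty := by
    obtain ⟨s, hs, h1, -⟩ := (hNb.2 y).exists_between (half_lt_self hpos)
    exact ⟨s, hs, h1⟩
  obtain ⟨s, hs, hmax⟩ := Set.exists_max_image A' id hfin hne
  have hEq : Nb y = s := by
    apply le_antisymm
    · apply (hNb.2 y).2
      intro t ht
      by_cases h : Nb y / 2 < t
      · exact hmax t ⟨ht, h⟩
      · have : Nb y / 2 < s := hs.2
        linarith
    · exact (hNb.2 y).1 hs.1
  rw [hEq]
  exact hs.1

/-- `F` is a node of arity `l`. -/
def Typ (Nb : c00 → ℝ) (x : c00) (F : Finset ℕ) (l : ℕ) : Prop :=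
  3 ≤ l ∧ ∃ E : Fin l → Finset ℕ, (∀ i j : Fin l, i < j → FLt (E i) (E j)) ∧ (∀ i, E i ⊂ F) ∧
    Nb (proj F x) = (glog l)⁻¹ * ∑ i, Nb (proj (E i) x)

lemma attain {Nb : c00 → ℝ} (hNb : IsGNorm Nb) (x : c00) (F : Finset ℕ) :
    Nb (proj F x) = supNorm (proj F x) ∨ ∃ l, Typ Nb x F l := by
  rcases attain0 hNb (proj F x) with h | ⟨l, hl, E, hE, h⟩
  · exact Or.inl h
  rcases fam_split hE F Nb (N_zero hNb.1) x with h1 | h1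
  · right
    refine ⟨l, hl, fun i => E i ∩ F, fun i j hij => (hE i j hij).mono Finset.inter_subset_left
      Finset.inter_subset_left, h1, ?_⟩
    rw [h]; simp only [proj_proj]
  · left
    rw [h1] at h
    have h3 := glog_lb hl
    have h0 : Nb (proj F x) = 0 := by
      rw [eq_inv_mul_iff_mul_eq₀ (by linarith)] at h
      nlinarith
    have hz := (hNb.1.1 _).1 h0
    rw [hz, supNorm_zero, N_zero hNb.1]

lemma concat {n : ℕ} {E : Fin n → Finset ℕ} (hE : ∀ i j : Fin n, i < j → FLt (E i) (E j))
    (Ls : Fin n → List (ℝ × Finset ℕ)) (hsub : ∀ i, ∀ p ∈ Ls i, p.2 ⊆ E i)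
    (hp : ∀ i, (Ls i).Pairwise (fun p q => FLt p.2 q.2)) :
    ∃ L : List (ℝ × Finset ℕ), (∀ p, p ∈ L ↔ ∃ i, p ∈ Ls i) ∧
      L.Pairwise (fun p q => FLt p.2 q.2) ∧
      ∀ h : ℝ × Finset ℕ → ℝ, (L.map h).sum = ∑ i, ((Ls i).map h).sum := by
  refine ⟨(List.ofFn Ls).flatten, ?_, ?_, ?_⟩
  · intro p
    simp [List.mem_flatten, List.mem_ofFn]
  · rw [List.pairwise_flatten]
    refine ⟨?_, ?_⟩
    · intro l hl
      obtain ⟨i, rfl⟩ := List.mem_ofFn.mp hl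
      exact hp i
    · rw [List.pairwise_ofFn]
      intro i j hij p hpi q hq
      exact (hE i j hij).mono (hsub i p hpi) (hsub j q hq)
  · intro h
    rw [List.map_flatten, List.sum_flatten, List.map_ofFn, List.map_ofFn, List.sum_ofFn]
    rfl

def IsTerminalNode (Nb : c00 → ℝ) (x : c00) (B : ℝ) (F : Finset ℕ) : Prop :=
  Nb (proj F x) = supNorm (proj F x) ∨ ∃ l, Typ Nb x F l ∧ B < glog l

lemma kraft_step {b B w : ℝ} (hb : 1.32 ≤ b) (hbB : b ≤ B) (hw : 0 < w) (hw1 : w ≤ 1) :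
    2 * b ≤ 16 * √(B / (w / b)) - 16 * √(B / w) := by
  have e : B / (w / b) = b * (B / w) := by field_simp
  rw [e, Real.sqrt_mul (by linarith)]
  have h1 : √b ≤ √(B / w) := by
    apply Real.sqrt_le_sqrt
    rw [le_div_iff₀ hw]; nlinarith
  have h2 : (1.148:ℝ) ≤ √b := Real.le_sqrt_of_sq_le (by norm_num; linarith)
  have h3 : √b * √b = b := Real.mul_self_sqrt (by linarith)
  nlinarith [mul_nonneg (sub_nonneg.2 h1) (sub_nonneg.2 h2)]

lemma flatten {Nb : c00 → ℝ} (hNb : IsGNorm Nb) (x : c00) (B : ℝ) (F : Finset ℕ) :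
    ∃ L : List (ℝ × Finset ℕ), (∀ p ∈ L, 0 < p.1 ∧ p.1 ≤ 1 ∧ p.2 ⊆ F ∧ IsTerminalNode Nb x B p.2) ∧
      L.Pairwise (fun p q => FLt p.2 q.2) ∧
      Nb (proj F x) = (L.map fun p => p.1 * Nb (proj p.2 x)).sum ∧
      (L.map fun p => (2:ℝ) ^ (-(16 * √(B / p.1)))).sum ≤ 1 := by
  induction F using Finset.strongInduction with
  | H F ih =>
    by_cases hterm : IsTerminalNode Nb x B F
    · refine ⟨[(1, F)], ?_, by simp, by simp, ?_⟩
      · simpa using hterm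
      · simp only [List.map_cons, List.map_nil, List.sum_cons, List.sum_nil, add_zero]
        apply Real.rpow_le_one_of_one_le_of_nonpos (by norm_num)
        have := Real.sqrt_nonneg (B / 1)
        linarith
    · rcases attain hNb x F with h | ⟨l, hl⟩
      · exact absurd (Or.inl h) hterm
      have hbB : glog l ≤ B := by
        by_contra hc
        exact hterm (Or.inr ⟨l, hl, not_le.mp hc⟩)
      obtain ⟨hl3, E, hE, hEF, hsum⟩ := hl
      have hb := glog_lb hl3
      set b := glog l with hbdef
      choose Ls h1 h2 h3 h4 using fun i => ih (E i) (hEF i)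
      obtain ⟨L, hL1, hL2, hL3⟩ := concat hE Ls (fun i p hp => (h1 i p hp).2.2.1) h2
      refine ⟨L.map fun p => (p.1 / b, p.2), ?_, ?_, ?_, ?_⟩
      · intro p hp
        obtain ⟨q, hq, rfl⟩ := List.mem_map.mp hp
        obtain ⟨i, hi⟩ := (hL1 q).1 hq
        obtain ⟨a1, a2, a3, a4⟩ := h1 i q hi
        refine ⟨by positivity, ?_, a3.trans (hEF i).subset, a4⟩
        show q.1 / b ≤ 1
        rw [div_le_one (by linarith)]; linarith
      · rw [List.pairwise_map]; exact hL2
      · rw [List.map_map, hsum, hL3, Finset.mul_sum]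
        apply Finset.sum_congr rfl
        intro i _
        rw [h3 i, ← List.sum_map_mul_left]
        congr 1
        apply List.map_congr_left
        intro p _
        simp only [Function.comp]
        rw [hbdef]; ring
      · rw [List.map_map, hL3]
        calc _ ≤ ∑ i : Fin l, (2:ℝ) ^ (-(2 * b)) := by
              apply Finset.sum_le_sum
              intro i _
              calc _ ≤ ((Ls i).map fun p => (2:ℝ) ^ (-(2*b)) * (2:ℝ) ^ (-(16 * √(B / p.1)))).sum := by
                    apply List.sum_le_sum
                    intro p hp
                    obtain ⟨a1, a2, -, -⟩ := h1 i p hp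
                    simp only [Function.comp]
                    rw [← Real.rpow_add (by norm_num)]
                    apply Real.rpow_le_rpow_of_exponent_le (by norm_num)
                    have := kraft_step hb hbB a1 a2
                    linarith
                _ ≤ _ := by
                    rw [List.sum_map_mul_left]
                    exact mul_le_of_le_one_right (by positivity) (h4 i)
          _ = l * (2:ℝ) ^ (-(2*b)) := by simp
          _ ≤ (2:ℝ) ^ (b + 1) * (2:ℝ) ^ (-(2*b)) :=
              mul_le_mul_of_nonneg_right (le_two_pow_glog l) (by positivity)
          _ ≤ 1 := by
              rw [← Real.rpow_add (by norm_num)]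
              apply Real.rpow_le_one_of_one_le_of_nonpos (by norm_num)
              linarith

lemma layer (w : ℝ) (hw : w ≤ 1) (n : ℕ) :
    w ≤ (1/4) ^ n + ∑ k ∈ Finset.range n,
      (if (1/4:ℝ) ^ (k+1) < w then (3/4) * (1/4:ℝ) ^ k else 0) := by
  induction n with
  | zero => simpa using hw
  | succ n ih =>
    rw [Finset.sum_range_succ]
    split_ifs with h
    · rw [pow_succ]; linarith
    · have : 0 ≤ ∑ k ∈ Finset.range n,
          (if (1/4:ℝ) ^ (k+1) < w then (3/4) * (1/4:ℝ) ^ k else 0) :=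
        Finset.sum_nonneg fun k _ => by split_ifs <;> positivity
      linarith

lemma level {N : c00 → ℝ} (hN : IsSchlumprechtNorm N) (y : c00) (L : List (ℝ × Finset ℕ))
    (hp : L.Pairwise (fun p q => FLt p.2 q.2)) {B b : ℝ} (hB : 0 ≤ B) (hb : 0 ≤ b)
    (hw : ∀ p ∈ L, 0 < p.1)
    (hk : (L.map fun p => (2:ℝ) ^ (-(16 * √(B / p.1)))).sum ≤ 2 ^ (b + 1)) (k : ℕ) :
    (L.map fun p => if (1/4:ℝ) ^ (k+1) < p.1 then N (proj p.2 y) else 0).sum ≤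
      (b + 2 + 32 * √B * 2 ^ k) * N y := by
  set L' := L.filter (fun p => (1/4:ℝ) ^ (k+1) < p.1) with hL'
  have e1 : (L.map fun p => if (1/4:ℝ) ^ (k+1) < p.1 then N (proj p.2 y) else 0).sum =
      ((L'.map Prod.snd).map fun F => N (proj F y)).sum := by
    rw [List.map_map, hL']
    clear hk hw hp hL' L'
    induction L with
    | nil => simp
    | cons a M ih =>
      rw [List.map_cons, List.sum_cons, ih, List.filter_cons]
      by_cases h : (1/4:ℝ) ^ (k+1) < a.1
      · rw [if_pos h, if_pos (by simpa using h)]; simp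
      · rw [if_neg h, if_neg (by simpa using h)]; simp
  have hU : ∀ w : ℝ, (1/4:ℝ) ^ (k+1) < w → 16 * √(B / w) ≤ 32 * √B * 2 ^ k := by
    intro w hw
    have h1 : √(B / w) ≤ √B * 2 ^ (k+1) := by
      rw [Real.sqrt_le_left (by positivity), mul_pow, Real.sq_sqrt hB]
      have hw0 : 0 < w := lt_trans (by positivity) hw
      rw [div_le_iff₀ hw0, mul_assoc]
      apply le_mul_of_one_le_right hB
      have : ((2:ℝ) ^ (k+1)) ^ 2 * (1/4) ^ (k+1) = 1 := by
        rw [← pow_mul, mul_comm (k+1) 2, pow_mul, ← mul_pow]; norm_num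
      rw [← this]
      apply mul_le_mul_of_nonneg_left hw.le (by positivity)
    rw [pow_succ] at h1
    linarith
  have hcount : (L'.length : ℝ) ≤ 2 ^ (b + 1 + 32 * √B * 2 ^ k) := by
    have h1 : (L'.length : ℝ) * (2:ℝ) ^ (-(32 * √B * 2 ^ k)) ≤
        (L'.map fun p => (2:ℝ) ^ (-(16 * √(B / p.1)))).sum := by
      have := List.card_nsmul_le_sum (L'.map fun p => (2:ℝ) ^ (-(16 * √(B / p.1))))
        ((2:ℝ) ^ (-(32 * √B * 2 ^ k))) (by
          intro z hz
          obtain ⟨p, hpL, rfl⟩ := List.mem_map.mp hz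
          apply Real.rpow_le_rpow_of_exponent_le (by norm_num)
          have := hU p.1 (by simpa [hL'] using (List.mem_filter.mp hpL).2)
          linarith)
      simpa using this
    have h2 : (L'.map fun p => (2:ℝ) ^ (-(16 * √(B / p.1)))).sum ≤
        (L.map fun p => (2:ℝ) ^ (-(16 * √(B / p.1)))).sum := by
      apply List.Sublist.sum_le_sum
      · exact List.Sublist.map _ List.filter_sublist
      · intro z hz
        obtain ⟨p, _, rfl⟩ := List.mem_map.mp hz
        positivity
    have h3 := h1.trans (h2.trans hk)
    rw [Real.rpow_neg (by norm_num), mul_inv_le_iff₀ (by positivity),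
      ← Real.rpow_add (by norm_num)] at h3
    exact h3
  rw [e1]
  refine (N_list hN y _ ?_).trans ?_
  · rw [List.pairwise_map]
    exact hp.sublist List.filter_sublist
  · apply mul_le_mul_of_nonneg_right _ (N_nonneg hN y)
    rw [List.length_map]
    unfold flog
    have hge : (1:ℝ) ≤ 2 ^ (b + 1 + 32 * √B * 2 ^ k) :=
      Real.one_le_rpow (by norm_num) (by positivity)
    rw [Real.logb_le_iff_le_rpow (by norm_num) (by positivity)]
    have : (2:ℝ) ^ (b + 2 + 32 * √B * 2 ^ k) = 2 ^ (b + 1 + 32 * √B * 2 ^ k) * 2 := by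
      rw [← Real.rpow_add_one (by norm_num)]
      congr 1; ring
    rw [this]; linarith

lemma weighted {N : c00 → ℝ} (hN : IsSchlumprechtNorm N) (y : c00) (L : List (ℝ × Finset ℕ))
    (hp : L.Pairwise (fun p q => FLt p.2 q.2)) {B b : ℝ} (hB : 0 ≤ B) (hb : 0 ≤ b)
    (hw : ∀ p ∈ L, 0 < p.1) (hw1 : ∀ p ∈ L, p.1 ≤ 1)
    (hk : (L.map fun p => (2:ℝ) ^ (-(16 * √(B / p.1)))).sum ≤ 2 ^ (b + 1)) :
    (L.map fun p => p.1 * N (proj p.2 y)).sum ≤ (b + 3 + 48 * √B) * N y := by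
  have hNy := N_nonneg hN y
  have hlen : (L.map fun p => N (proj p.2 y)).sum ≤ flog L.length * N y := by
    have := N_list hN y (L.map Prod.snd) (by rw [List.pairwise_map]; exact hp)
    simpa [List.map_map, Function.comp_def] using this
  obtain ⟨n, hn⟩ : ∃ n : ℕ, (1/4:ℝ) ^ n * flog L.length ≤ 1 := by
    obtain ⟨n, hn⟩ := exists_pow_lt_of_lt_one (y := (1/4:ℝ))
      (show (0:ℝ) < 1 / (|flog L.length| + 1) by positivity) (by norm_num)
    refine ⟨n, ?_⟩
    rw [lt_div_iff₀ (by positivity)] at hn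
    have h1 : (0:ℝ) < (1/4) ^ n := by positivity
    nlinarith [le_abs_self (flog L.length)]
  have step : (L.map fun p => p.1 * N (proj p.2 y)).sum ≤
      (L.map fun p => (1/4) ^ n * N (proj p.2 y) + ∑ k ∈ Finset.range n, (3/4) * (1/4:ℝ) ^ k *
        (if (1/4:ℝ) ^ (k+1) < p.1 then N (proj p.2 y) else 0)).sum := by
    apply List.sum_le_sum
    intro p hpL
    have := mul_le_mul_of_nonneg_right (layer p.1 (hw1 p hpL) n) (N_nonneg hN (proj p.2 y))
    refine this.trans (le_of_eq ?_)
    rw [add_mul, Finset.sum_mul]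
    congr 1
    apply Finset.sum_congr rfl
    intro k _
    split_ifs <;> ring
  refine step.trans ?_
  have swap : ∀ (M : List (ℝ × Finset ℕ)) (h : ℕ → ℝ × Finset ℕ → ℝ),
      (M.map fun p => ∑ k ∈ Finset.range n, h k p).sum =
        ∑ k ∈ Finset.range n, (M.map (h k)).sum := by
    intro M h
    induction M with
    | nil => simp
    | cons a M ih => simp [ih, Finset.sum_add_distrib]
  rw [List.sum_map_add, List.sum_map_mul_left, swap]
  have t1 : (1/4:ℝ) ^ n * (L.map fun p => N (proj p.2 y)).sum ≤ N y := by
    calc _ ≤ (1/4:ℝ) ^ n * (flog L.length * N y) :=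
          mul_le_mul_of_nonneg_left hlen (by positivity)
      _ = ((1/4:ℝ) ^ n * flog L.length) * N y := by ring
      _ ≤ 1 * N y := mul_le_mul_of_nonneg_right hn hNy
      _ = N y := one_mul _
  have t2 : ∀ n : ℕ, ∑ k ∈ Finset.range n, (3/4) * (1/4:ℝ) ^ k * (b + 2 + 32 * √B * 2 ^ k) =
      (b + 2) * (1 - (1/4) ^ n) + 48 * √B * (1 - (1/2) ^ n) := by
    intro n
    induction n with
    | zero => simp
    | succ n ih =>
      rw [Finset.sum_range_succ, ih]
      have e : (1/4:ℝ) ^ n * 2 ^ n = (1/2) ^ n := by rw [← mul_pow]; norm_num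
      rw [pow_succ, pow_succ, ← e]; ring
  calc _ ≤ N y + ∑ k ∈ Finset.range n, (3/4) * (1/4:ℝ) ^ k * (b + 2 + 32 * √B * 2 ^ k) * N y := by
        apply add_le_add t1
        apply Finset.sum_le_sum
        intro k _
        rw [List.sum_map_mul_left, mul_assoc ((3/4) * (1/4:ℝ) ^ k)]
        exact mul_le_mul_of_nonneg_left (level hN y L hp hB hb hw hk k) (by positivity)
    _ ≤ N y + ((b + 2) + 48 * √B) * N y := by
        rw [← Finset.sum_mul, t2]
        have h1 : (0:ℝ) < (1/4) ^ n := by positivity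
        have h2 : (0:ℝ) < (1/2) ^ n := by positivity
        have h3 := Real.sqrt_nonneg B
        have h4 : (b + 2) * (1 - (1/4) ^ n) + 48 * √B * (1 - (1/2) ^ n) ≤ (b + 2) + 48 * √B := by
          nlinarith [mul_nonneg h3 h2.le, mul_nonneg hb h1.le]
        have h5 := mul_le_mul_of_nonneg_right h4 hNy
        linarith
    _ = _ := by ring

lemma main_claim {N : c00 → ℝ} (hN : IsSchlumprechtNorm N) {Nb : c00 → ℝ} (hNb : IsGNorm Nb)
    (x : c00) (F : Finset ℕ) : ∀ l, Typ Nb x F l →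
      Nb (proj F x) ≤ Real.exp (198 / √(glog l)) * N (proj F x) := by
  induction F using Finset.strongInduction with
  | H F ih =>
    rintro l ⟨hl3, E, hE, hEF, hsum⟩
    have hb := glog_lb hl3
    set b := glog l with hbdef
    choose Ls h1 h2 h3 h4 using fun i => flatten hNb x (4 * b) (E i)
    obtain ⟨L, hL1, hL2, hL3⟩ := concat hE Ls (fun i p hp => (h1 i p hp).2.2.1) h2
    have hLp : ∀ p ∈ L, 0 < p.1 ∧ p.1 ≤ 1 ∧ p.2 ⊂ F ∧ IsTerminalNode Nb x (4 * b) p.2 := by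
      intro p hp
      obtain ⟨i, hi⟩ := (hL1 p).1 hp
      obtain ⟨a1, a2, a3, a4⟩ := h1 i p hi
      exact ⟨a1, a2, Finset.ssubset_of_subset_of_ssubset a3 (hEF i), a4⟩
    have hsb : 0 < √b := Real.sqrt_pos.2 (by linarith)
    have hs1 : 1 ≤ √b := Real.one_le_sqrt.2 (by linarith)
    have hss : √b * √b = b := Real.mul_self_sqrt (by linarith)
    have hs4 : √(4 * b) = 2 * √b := by
      rw [Real.sqrt_mul (by norm_num)]
      congr 1
      rw [show (4:ℝ) = 2 ^ 2 by norm_num]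
      exact Real.sqrt_sq (by norm_num)
    have hpiece : ∀ p ∈ L, Nb (proj p.2 x) ≤ Real.exp (99 / √b) * N (proj p.2 (proj F x)) := by
      intro p hp
      obtain ⟨a1, a2, a3, a4⟩ := hLp p hp
      rw [proj_sub a3.subset]
      have hn := N_nonneg hN (proj p.2 x)
      rcases a4 with h | ⟨l', hl', hlt⟩
      · rw [h]
        refine (N_sup hN _).trans (le_mul_of_one_le_left hn ?_)
        exact Real.one_le_exp (by positivity)
      · refine (ih p.2 a3 l' hl').trans (mul_le_mul_of_nonneg_right ?_ hn)
        apply Real.exp_le_exp.2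
        have h5 : 2 * √b ≤ √(glog l') := by
          rw [← hs4]; exact Real.sqrt_le_sqrt hlt.le
        rw [div_le_div_iff₀ (by linarith) hsb]
        linarith
    have hkraft : (L.map fun p => (2:ℝ) ^ (-(16 * √(4 * b / p.1)))).sum ≤ 2 ^ (b + 1) := by
      rw [hL3]
      calc _ ≤ ∑ i : Fin l, (1:ℝ) := Finset.sum_le_sum fun i _ => h4 i
        _ = l := by simp
        _ ≤ _ := le_two_pow_glog l
    have hW := weighted hN (proj F x) L hL2 (B := 4 * b) (b := b) (by linarith) (by linarith)
      (fun p hp => (hLp p hp).1) (fun p hp => (hLp p hp).2.1) hkraft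
    have hNF := N_nonneg hN (proj F x)
    have hbinv : 0 ≤ b⁻¹ := inv_nonneg.2 (by linarith)
    calc Nb (proj F x) = b⁻¹ * (L.map fun p => p.1 * Nb (proj p.2 x)).sum := by
          rw [hsum, hL3]
          congr 1
          exact Finset.sum_congr rfl fun i _ => h3 i
      _ ≤ b⁻¹ * (L.map fun p => Real.exp (99 / √b) * (p.1 * N (proj p.2 (proj F x)))).sum := by
          apply mul_le_mul_of_nonneg_left _ hbinv
          apply List.sum_le_sum
          intro p hp
          have := mul_le_mul_of_nonneg_left (hpiece p hp) (hLp p hp).1.le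
          linarith
      _ ≤ b⁻¹ * (Real.exp (99 / √b) * ((b + 3 + 48 * √(4 * b)) * N (proj F x))) := by
          rw [List.sum_map_mul_left]
          gcongr
      _ = Real.exp (99 / √b) * (b⁻¹ * (b + 3 + 48 * √(4 * b))) * N (proj F x) := by ring
      _ ≤ Real.exp (99 / √b) * Real.exp (99 / √b) * N (proj F x) := by
          gcongr
          have h6 := Real.add_one_le_exp (99 / √b)
          refine le_trans ?_ h6
          rw [inv_mul_le_iff₀ (by linarith), hs4]
          have : b * (99 / √b + 1) = 99 * √b + b := by
            rw [mul_add, mul_one]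
            congr 1
            rw [mul_div_assoc', div_eq_iff hsb.ne']
            nlinarith
          rw [this]; linarith
      _ = _ := by
          rw [← Real.exp_add]
          congr 2
          ring

/-- Lemma 3.3: the norm `⟨⟨·⟩⟩` (implicitly defined via
`g(x) = log₂(1 + x/2)` and `ℓ ≥ 3`) is equivalent to the Schlumprecht norm. -/
theorem g_norm_equivalent
    (N : c00 → ℝ) (hN : IsSchlumprechtNorm N)
    (Nb : c00 → ℝ) (hNb : IsGNorm Nb) :
    (∀ x : c00, N x ≤ Nb x) ∧ ∃ C : ℝ, 1 ≤ C ∧ ∀ x : c00, Nb x ≤ C * N x := by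
  refine ⟨fun x => ?_, Real.exp 198, Real.one_le_exp (by norm_num), fun x => ?_⟩
  · have := part_one hN hNb x x.support
    rwa [proj_supp] at this
  · have hn := N_nonneg hN x
    rcases attain hNb x x.support with h | ⟨l, hl⟩
    · rw [proj_supp] at h
      rw [h]
      exact (N_sup hN x).trans (le_mul_of_one_le_left hn (Real.one_le_exp (by norm_num)))
    · have h := main_claim hN hNb x x.support l hl
      rw [proj_supp] at h
      refine h.trans (mul_le_mul_of_nonneg_right ?_ hn)
      apply Real.exp_le_exp.2
      have hb := glog_lb hl.1
      exact div_le_self (by norm_num) (Real.one_le_sqrt.2 (by linarith))
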